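/- As formal power series in q and A, B: ∑_{a,b,ab ≥ 0} A^{a+ab} B^{b+ab} q^{T_{a+b+ab} + T_{ab}} / ((q)_a (q)_b (q)_{ab}) = ∏_{n≥1}(1 + A q^n) · ∏_{n≥1}(1 + B q^n). -/

import Mathlib

open Finset

/-- Triangular number `T n = n(n+1)/2`. -/
def tri (n : ℕ) : ℕ := n * (n + 1) / 2

/-!
Write `E(x) = ∑ xⁿ q^{T n} / (q)_n`. Euler's identity `E(x) = ∏_{n ≥ 1} (1 + x qⁿ)` follows by
iterating `E(x) = (1 + x q) E(x q)`.

In the triple sum, the part depending on `a` sums to `E(A q^{b+c})`, where `c` stands for the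
index `ab` of the statement. Collecting the remaining pairs `(b, c)` with `b + c = n`, the
`q`-binomial theorem turns the sum over `c` into `∏_{j=1}^{n} (1 + A q^j) / (q)_n`. This finite
product is exactly the one that completes `E(A q^n)` to `E(A)`, so that what is left is
`E(A) ∑ Bⁿ q^{T n} / (q)_n = E(A) E(B)`.
-/

open Filter
open scoped Topology

lemma tri_succ (n : ℕ) : tri (n + 1) = tri n + (n + 1) := by
  have := Nat.triangle_succ (n + 1)
  simp only [Nat.add_sub_cancel] at this
  simpa only [tri, mul_comm] using this

lemma tri_add (m n : ℕ) : tri (m + n) = tri m + tri n + m * n := by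
  induction n with
  | zero => simp [tri]
  | succ n ih => rw [← add_assoc, tri_succ, ih, tri_succ]; ring

theorem hasSum_sum_antidiagonal {ι α : Type*} [AddCommMonoid ι] [HasAntidiagonal ι]
    [AddCommMonoid α] [TopologicalSpace α] [ContinuousAdd α] [RegularSpace α]
    {f : ι × ι → α} {s : α} (hf : HasSum f s) :
    HasSum (fun n ↦ ∑ p ∈ antidiagonal n, f p) s :=
  (HasAntidiagonal.sigmaAntidiagonalEquivProd.hasSum_iff.mpr hf).sigma fun n ↦
    Finset.hasSum (antidiagonal n) f

lemma one_sub_pow_succ_ne_zero {R : Type*} [Ring R] {q : R} (hq : ¬IsOfFinOrder q) (n : ℕ) :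
    1 - q ^ (n + 1) ≠ 0 :=
  fun h ↦ hq <| isOfFinOrder_iff_pow_eq_one.mpr ⟨n + 1, n.succ_pos, (sub_eq_zero.mp h).symm⟩

/-- The `q`-Pochhammer symbol `(q)_n = (q; q)_n`, the product of the `1 - q ^ j`
for `1 ≤ j ≤ n`. -/
def qPochhammer {R : Type*} [CommRing R] (q : R) (n : ℕ) : R :=
  ∏ j ∈ range n, (1 - q ^ (j + 1))

section CommRing

variable {R : Type*} [CommRing R]

@[simp]
lemma qPochhammer_zero (q : R) : qPochhammer q 0 = 1 := prod_range_zero _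

lemma qPochhammer_succ (q : R) (n : ℕ) :
    qPochhammer q (n + 1) = qPochhammer q n * (1 - q ^ (n + 1)) :=
  prod_range_succ _ n

end CommRing

section Field

variable {K : Type*} [Field K]

/-- The `n`-th term `xⁿ q^{T n} / (q)_n` of Euler's series for `∏_{n ≥ 1} (1 + x qⁿ)`. -/
def eulerTerm (q x : K) (n : ℕ) : K := x ^ n * q ^ tri n / qPochhammer q n

@[simp]
lemma eulerTerm_zero (q x : K) : eulerTerm q x 0 = 1 := by simp [eulerTerm, tri]

lemma eulerTerm_succ (q x : K) (n : ℕ) :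
    eulerTerm q x (n + 1) = x * q ^ (n + 1) / (1 - q ^ (n + 1)) * eulerTerm q x n := by
  simp only [eulerTerm, qPochhammer_succ, tri_succ, pow_add q (tri n), div_eq_mul_inv, mul_inv]
  ring

lemma one_sub_pow_mul_eulerTerm_succ {q : K} (hq : ¬IsOfFinOrder q) (x : K) (n : ℕ) :
    (1 - q ^ (n + 1)) * eulerTerm q x (n + 1) = x * q ^ (n + 1) * eulerTerm q x n := by
  rw [eulerTerm_succ, ← mul_assoc, mul_div_cancel₀ _ (one_sub_pow_succ_ne_zero hq n)]

lemma eulerTerm_mul (q x y : K) (n : ℕ) : eulerTerm q (x * y) n = y ^ n * eulerTerm q x n := by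
  rw [eulerTerm, eulerTerm, mul_pow]
  ring

lemma one_sub_pow_mul_sum_antidiagonal_eulerTerm_div {q : K} (hq : ¬IsOfFinOrder q) (x : K)
    (n : ℕ) :
    (1 - q ^ (n + 1)) *
        ∑ p ∈ antidiagonal (n + 1), eulerTerm q x p.2 / qPochhammer q p.1 =
      (1 + x * q ^ (n + 1)) * ∑ p ∈ antidiagonal n, eulerTerm q x p.2 / qPochhammer q p.1 := by
  have split : ∀ p ∈ antidiagonal (n + 1),
      (1 - q ^ (n + 1)) * (eulerTerm q x p.2 / qPochhammer q p.1) =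
        (1 - q ^ p.1) * (eulerTerm q x p.2 / qPochhammer q p.1) +
          q ^ p.1 * ((1 - q ^ p.2) * eulerTerm q x p.2) / qPochhammer q p.1 := by
    intro p hp
    rw [← mem_antidiagonal.mp hp, pow_add]
    ring
  have lower_fst : ∑ p ∈ antidiagonal (n + 1),
      (1 - q ^ p.1) * (eulerTerm q x p.2 / qPochhammer q p.1) =
        ∑ p ∈ antidiagonal n, eulerTerm q x p.2 / qPochhammer q p.1 := by
    rw [Nat.sum_antidiagonal_succ, pow_zero, sub_self, zero_mul, zero_add]
    refine sum_congr rfl fun p _ ↦ ?_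
    have := one_sub_pow_succ_ne_zero hq p.1
    rw [qPochhammer_succ]
    field_simp
  have lower_snd : ∑ p ∈ antidiagonal (n + 1),
      q ^ p.1 * ((1 - q ^ p.2) * eulerTerm q x p.2) / qPochhammer q p.1 =
        x * q ^ (n + 1) * ∑ p ∈ antidiagonal n, eulerTerm q x p.2 / qPochhammer q p.1 := by
    rw [Nat.sum_antidiagonal_succ', pow_zero, sub_self, zero_mul, mul_zero, zero_div, zero_add,
      mul_sum]
    refine sum_congr rfl fun p hp ↦ ?_
    rw [one_sub_pow_mul_eulerTerm_succ hq, ← mem_antidiagonal.mp hp]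
    ring
  rw [mul_sum, sum_congr rfl split, sum_add_distrib, lower_fst, lower_snd]
  ring

/-- The `q`-binomial theorem (Rothe, Gauss), with the Gaussian binomial coefficients written as
quotients of `q`-Pochhammer symbols. -/
theorem sum_antidiagonal_eulerTerm_div_qPochhammer {q : K} (hq : ¬IsOfFinOrder q) (x : K)
    (n : ℕ) :
    ∑ p ∈ antidiagonal n, eulerTerm q x p.2 / qPochhammer q p.1 =
      (∏ j ∈ range n, (1 + x * q ^ (j + 1))) / qPochhammer q n := by
  induction n with
  | zero => simp
  | succ n ih =>
    refine mul_left_cancel₀ (one_sub_pow_succ_ne_zero hq n) ?_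
    rw [one_sub_pow_mul_sum_antidiagonal_eulerTerm_div hq, ih, prod_range_succ, qPochhammer_succ]
    have := one_sub_pow_succ_ne_zero hq n
    field_simp

/-- The summand `A^{a+c} B^{b+c} q^{T_{a+b+c} + T_c} / ((q)_a (q)_b (q)_c)` of Schur's key
identity, with `c` for the index written `ab` in the statement. -/
def schurTerm (q A B : K) (a b c : ℕ) : K :=
  A ^ (a + c) * B ^ (b + c) * q ^ (tri (a + b + c) + tri c) /
    (qPochhammer q a * qPochhammer q b * qPochhammer q c)

lemma schurTerm_eq_pow_mul_eulerTerm (q A B : K) (a b c : ℕ) :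
    schurTerm q A B a b c = q ^ (a * b + (a + b) * c + tri c) *
      (eulerTerm q A a * (eulerTerm q B b * eulerTerm q (A * B) c)) := by
  simp only [schurTerm, eulerTerm, tri_add]
  ring

lemma schurTerm_eq_mul_eulerTerm (q A B : K) (a b c : ℕ) :
    schurTerm q A B a b c = B ^ (b + c) * q ^ tri (b + c) *
      (eulerTerm q A c / qPochhammer q b) * eulerTerm q (A * q ^ (b + c)) a := by
  simp only [schurTerm, eulerTerm, tri_add]
  ring

end Field

section NormedField

variable {𝕜 : Type*} [NormedField 𝕜] {q : 𝕜}

lemma not_isOfFinOrder_of_norm_lt_one (hq : ‖q‖ < 1) : ¬IsOfFinOrder q :=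
  fun h ↦ hq.ne h.norm_eq_one

lemma tendsto_eulerTerm_ratio (hq : ‖q‖ < 1) (x : 𝕜) :
    Tendsto (fun n : ℕ ↦ x * q ^ (n + 1) / (1 - q ^ (n + 1))) atTop (𝓝 0) := by
  have hpow : Tendsto (fun n : ℕ ↦ q ^ (n + 1)) atTop (𝓝 0) :=
    (tendsto_pow_atTop_nhds_zero_of_norm_lt_one hq).comp (tendsto_add_atTop_nat 1)
  simpa [Pi.div_def] using (hpow.const_mul x).div (hpow.const_sub 1) (by simp)

lemma summable_norm_eulerTerm (hq : ‖q‖ < 1) (x : 𝕜) : Summable fun n ↦ ‖eulerTerm q x n‖ := by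
  refine summable_of_ratio_norm_eventually_le one_half_lt_one ?_
  have hratio := (tendsto_eulerTerm_ratio hq x).norm
  rw [norm_zero] at hratio
  filter_upwards [hratio.eventually_le_const one_half_pos] with n hn
  rw [norm_norm, norm_norm, eulerTerm_succ, norm_mul]
  gcongr

/-- Euler's series `∑ xⁿ q^{T n} / (q)_n`. -/
noncomputable def eulerSeries (q x : 𝕜) : 𝕜 := ∑' n, eulerTerm q x n

variable [CompleteSpace 𝕜]

lemma hasSum_eulerTerm (hq : ‖q‖ < 1) (x : 𝕜) : HasSum (eulerTerm q x) (eulerSeries q x) :=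
  (summable_norm_eulerTerm hq x).of_norm.hasSum

theorem eulerSeries_eq_one_add_mul (hq : ‖q‖ < 1) (x : 𝕜) :
    eulerSeries q x = (1 + x * q) * eulerSeries q (x * q) := by
  have term_sub (n : ℕ) : eulerTerm q x (n + 1) - eulerTerm q (x * q) (n + 1) =
      x * q * eulerTerm q (x * q) n := by
    rw [eulerTerm_mul, eulerTerm_mul]
    linear_combination
      one_sub_pow_mul_eulerTerm_succ (not_isOfFinOrder_of_norm_lt_one hq) x n
  have hsub := (hasSum_eulerTerm hq x).sub (hasSum_eulerTerm hq (x * q))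
  rw [← hasSum_nat_add_iff' 1] at hsub
  simp only [term_sub, range_one, sum_singleton, eulerTerm_zero, sub_self, sub_zero] at hsub
  linear_combination hsub.unique ((hasSum_eulerTerm hq (x * q)).mul_left (x * q))

theorem eulerSeries_eq_prod_mul (hq : ‖q‖ < 1) (x : 𝕜) (n : ℕ) :
    eulerSeries q x =
      (∏ j ∈ range n, (1 + x * q ^ (j + 1))) * eulerSeries q (x * q ^ n) := by
  induction n with
  | zero => simp
  | succ n ih =>
    rw [ih, prod_range_succ, eulerSeries_eq_one_add_mul hq (x * q ^ n)]
    simp only [pow_succ, mul_assoc]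

lemma tendsto_eulerSeries_nhds_zero (hq : ‖q‖ < 1) :
    Tendsto (eulerSeries q) (𝓝 0) (𝓝 1) := by
  have eulerSeries_zero : ∑' n, eulerTerm q 0 n = 1 := by
    rw [tsum_eq_single 0 fun n hn ↦ by simp [eulerTerm, hn], eulerTerm_zero]
  rw [← eulerSeries_zero]
  refine tendsto_tsum_of_dominated_convergence (summable_norm_eulerTerm hq 1) (fun n ↦ ?_) ?_
  · have : Continuous fun x ↦ eulerTerm q x n := by unfold eulerTerm; fun_prop
    exact this.tendsto 0
  · filter_upwards [Metric.closedBall_mem_nhds (0 : 𝕜) one_pos] with x hx n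
    rw [← one_mul x, eulerTerm_mul, norm_mul, norm_pow]
    exact mul_le_of_le_one_left (norm_nonneg _)
      (pow_le_one₀ (norm_nonneg _) (mem_closedBall_zero_iff.mp hx))

lemma multipliable_one_add_mul_pow_succ (hq : ‖q‖ < 1) (x : 𝕜) :
    Multipliable fun n : ℕ ↦ 1 + x * q ^ (n + 1) := by
  refine multipliable_one_add_of_summable ?_
  simpa only [norm_mul, norm_pow] using
    ((summable_nat_add_iff 1).mpr (summable_geometric_of_lt_one (norm_nonneg q) hq)).mul_left ‖x‖

theorem eulerSeries_eq_tprod (hq : ‖q‖ < 1) (x : 𝕜) :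
    eulerSeries q x = ∏' n : ℕ, (1 + x * q ^ (n + 1)) := by
  have harg : Tendsto (fun n : ℕ ↦ x * q ^ n) atTop (𝓝 0) := by
    simpa using (tendsto_pow_atTop_nhds_zero_of_norm_lt_one hq).const_mul x
  have hlim := (multipliable_one_add_mul_pow_succ hq x).hasProd.tendsto_prod_nat.mul
    ((tendsto_eulerSeries_nhds_zero hq).comp harg)
  simp only [Function.comp_apply, ← eulerSeries_eq_prod_mul hq, mul_one] at hlim
  exact tendsto_nhds_unique tendsto_const_nhds hlim

lemma summable_schurTerm (hq : ‖q‖ < 1) (A B : 𝕜) :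
    Summable fun t : ℕ × ℕ × ℕ ↦ schurTerm q A B t.1 t.2.1 t.2.2 := by
  refine .of_norm_bounded ((summable_norm_eulerTerm hq A).mul_norm
    ((summable_norm_eulerTerm hq B).mul_norm (summable_norm_eulerTerm hq (A * B)))) fun t ↦ ?_
  rw [schurTerm_eq_pow_mul_eulerTerm, norm_mul, norm_pow]
  exact mul_le_of_le_one_left (norm_nonneg _) (pow_le_one₀ (norm_nonneg _) hq.le)

lemma hasSum_schurTerm (hq : ‖q‖ < 1) (A B : 𝕜) (b c : ℕ) :
    HasSum (fun a ↦ schurTerm q A B a b c)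
      (B ^ (b + c) * q ^ tri (b + c) * (eulerTerm q A c / qPochhammer q b) *
        eulerSeries q (A * q ^ (b + c))) := by
  simp only [schurTerm_eq_mul_eulerTerm]
  exact (hasSum_eulerTerm hq _).mul_left _

lemma sum_antidiagonal_eulerTerm_mul_eulerSeries (hq : ‖q‖ < 1) (A B : 𝕜) (n : ℕ) :
    ∑ p ∈ antidiagonal n, B ^ (p.1 + p.2) * q ^ tri (p.1 + p.2) *
        (eulerTerm q A p.2 / qPochhammer q p.1) * eulerSeries q (A * q ^ (p.1 + p.2)) =
      eulerTerm q B n * eulerSeries q A := by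
  calc
    _ = B ^ n * q ^ tri n * (∑ p ∈ antidiagonal n, eulerTerm q A p.2 / qPochhammer q p.1) *
          eulerSeries q (A * q ^ n) := by
      rw [mul_sum, sum_mul]
      exact sum_congr rfl fun p hp ↦ by rw [mem_antidiagonal.mp hp]
    _ = eulerTerm q B n *
          ((∏ j ∈ range n, (1 + A * q ^ (j + 1))) * eulerSeries q (A * q ^ n)) := by
      rw [sum_antidiagonal_eulerTerm_div_qPochhammer (not_isOfFinOrder_of_norm_lt_one hq),
        eulerTerm]
      ring
    _ = eulerTerm q B n * eulerSeries q A := by rw [← eulerSeries_eq_prod_mul hq]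

theorem schur_key_identity_general (hq : ‖q‖ < 1) (A B : 𝕜) :
    HasSum (fun t : ℕ × ℕ × ℕ ↦ schurTerm q A B t.1 t.2.1 t.2.2)
      ((∏' n : ℕ, (1 + A * q ^ (n + 1))) * ∏' n : ℕ, (1 + B * q ^ (n + 1))) := by
  have htriple := (summable_schurTerm hq A B).hasSum
  have hpairs := ((Equiv.prodComm _ _).hasSum_iff.mpr htriple).prod_fiberwise fun p ↦
    hasSum_schurTerm hq A B p.1 p.2
  have hdiag := hasSum_sum_antidiagonal hpairs
  simp only [sum_antidiagonal_eulerTerm_mul_eulerSeries hq] at hdiag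
  have hvalue := hdiag.unique ((hasSum_eulerTerm hq B).mul_right (eulerSeries q A))
  rwa [hvalue, mul_comm, eulerSeries_eq_tprod hq, eulerSeries_eq_tprod hq] at htriple

end NormedField

/-- The two parameter key identity for Schur's theorem:
`∑_{a,b,ab ≥ 0} A^{a+ab} B^{b+ab} q^{T_{a+b+ab}+T_{ab}} / ((q)_a (q)_b (q)_{ab})
  = ∏_{n≥1} (1 + A q^n) ∏_{n≥1} (1 + B q^n)`, for `|q| < 1`. -/
theorem schur_key_identity (q A B : ℂ) (hq : ‖q‖ < 1) :
    ∑' t : ℕ × ℕ × ℕ,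
      A ^ (t.1 + t.2.2) * B ^ (t.2.1 + t.2.2) *
        q ^ (tri (t.1 + t.2.1 + t.2.2) + tri t.2.2) /
        ((∏ j ∈ Finset.range t.1, (1 - q ^ (j + 1))) *
         (∏ j ∈ Finset.range t.2.1, (1 - q ^ (j + 1))) *
         (∏ j ∈ Finset.range t.2.2, (1 - q ^ (j + 1))))
    = (∏' n : ℕ, (1 + A * q ^ (n + 1))) * ∏' n : ℕ, (1 + B * q ^ (n + 1)) := by
  exact (schur_key_identity_general hq A B).tsum_eq
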